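/- arXiv:2309.13405 — 2 statements merged into one kernel-verified Lean document; each statement's English description precedes it below -/
import Mathlib

section
/- Under Assumption 1, if the thresholded graph G = supp(T) is acyclic (contains no cycles), then the optimal graph supp(Θ*) is also acyclic. -/
/-!
The optimal graph is a subgraph of the thresholded graph, so it inherits acyclicity.

On the feasible set the penalty is linear, and the objective equals
`-log det Θ + ∑ i j, Θ i j * (S i j - Λ i j)` (`objf_eq`). Let `Θ` be optimal with `Θ i j < 0`.
The inverse of a positive definite matrix with nonpositive off-diagonal entries is entrywise
nonnegative, and its `(i, j)` entry is strictly positive when `Θ i j < 0` (`inv_pos_of_neg`).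
Hence raising `Θ i j` and `Θ j i` by a small `t > 0` strictly increases the determinant
(`det_bump`) and stays feasible (`posDef_of_le`). If `S i j ≤ Λ i j`, the linear part does not
increase, which contradicts minimality. So `S i j > Λ i j`, i.e. `i` and `j` are adjacent
in the thresholded graph.
-/

attribute [local instance] Classical.propDecidable

noncomputable section

open Matrix

/-- The MTP2 constraint set `M^n`: real symmetric positive definite matrices with
nonpositive off-diagonal entries. -/
def MSet {n : Type*} [Fintype n] [DecidableEq n] (Θ : Matrix n n ℝ) : Prop :=
  Θ.IsSymm ∧ Θ.PosDef ∧ ∀ i j, i ≠ j → Θ i j ≤ 0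

/-- The objective `f(Θ) = -log det Θ + tr(Θ S) + ∑_{i ≠ j} Λ_ij |Θ_ij|`. -/
def objf {n : Type*} [Fintype n] [DecidableEq n] (S Λ Θ : Matrix n n ℝ) : ℝ :=
  -Real.log Θ.det + (Θ * S).trace + ∑ i, ∑ j, if i = j then 0 else Λ i j * |Θ i j|

/-- The thresholded sample covariance matrix `T` (MTP₂ version). -/
def thresh {p : ℕ} (S Λ : Matrix (Fin p) (Fin p) ℝ) : Matrix (Fin p) (Fin p) ℝ :=
  Matrix.of fun i j => if i ≠ j ∧ Λ i j < S i j then S i j - Λ i j else 0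

/-- The thresholded matrix `T` for the traditional graphical lasso. -/
def threshGL {p : ℕ} (S Λ : Matrix (Fin p) (Fin p) ℝ) : Matrix (Fin p) (Fin p) ℝ :=
  Matrix.of fun i j =>
    if i = j ∨ |S i j| ≤ Λ i j then 0 else S i j - Λ i j * Real.sign (S i j)

/-- The support graph of a (symmetric) matrix: `i ~ j` iff `i ≠ j` and `A i j ≠ 0`. -/
def suppG {p : ℕ} (A : Matrix (Fin p) (Fin p) ℝ) : SimpleGraph (Fin p) :=
  SimpleGraph.fromRel fun i j => A i j ≠ 0

/-- The graph obtained from `G` by deleting all bridges. -/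
def bridgeDeleted {V : Type*} (G : SimpleGraph V) : SimpleGraph V :=
  G.deleteEdges {e | G.IsBridge e}

/-- `V` is a bridge-block of `G`: a connected component of the bridge-deleted graph. -/
def IsBlock {p : ℕ} (G : SimpleGraph (Fin p)) (V : Finset (Fin p)) : Prop :=
  ∃ i, ∀ j, j ∈ V ↔ (bridgeDeleted G).Reachable i j

/-- `ζ_i` defined from `S` and a thresholded matrix `T`. -/
def zetaT {p : ℕ} (S T : Matrix (Fin p) (Fin p) ℝ) (i : Fin p) : ℝ :=
  (1 / S i i) *
    ∑ m, if (suppG T).IsBridge s(i, m)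
      then T i m ^ 2 / (S i i * S m m - T i m ^ 2) else 0

/-- `ζ_i` for the MTP₂ problem. -/
def zeta {p : ℕ} (S Λ : Matrix (Fin p) (Fin p) ℝ) (i : Fin p) : ℝ :=
  zetaT S (thresh S Λ) i

/-- Principal submatrix of `A` on the index set `V`. -/
def subMat {p : ℕ} (A : Matrix (Fin p) (Fin p) ℝ) (V : Finset (Fin p)) :
    Matrix ↥V ↥V ℝ :=
  A.submatrix (fun a => (a : Fin p)) fun a => (a : Fin p)

/-- `Θk` is the minimizer of the `k`-th MTP₂ subproblem on the bridge-block `V`. -/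
def IsSubMinimizer {p : ℕ} (S Λ : Matrix (Fin p) (Fin p) ℝ) (V : Finset (Fin p))
    (Θk : Matrix ↥V ↥V ℝ) : Prop :=
  MSet Θk ∧ ∀ Θ' : Matrix ↥V ↥V ℝ, MSet Θ' →
    -Real.log Θk.det + (Θk * subMat (S - Λ) V).trace ≤
      -Real.log Θ'.det + (Θ' * subMat (S - Λ) V).trace

/-- `Θk` is the minimizer of the `k`-th graphical lasso subproblem on the block `V`. -/
def IsGLSubMinimizer {p : ℕ} (S Λ : Matrix (Fin p) (Fin p) ℝ) (V : Finset (Fin p))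
    (Θk : Matrix ↥V ↥V ℝ) : Prop :=
  Θk.IsSymm ∧ Θk.PosDef ∧ ∀ Θ' : Matrix ↥V ↥V ℝ, Θ'.IsSymm → Θ'.PosDef →
    objf (subMat S V) (subMat Λ V) Θk ≤ objf (subMat S V) (subMat Λ V) Θ'

/-- The product `∏_t R_{u_t,u_{t+1}} / √(S_{u_t,u_t} S_{u_{t+1},u_{t+1}})` over the
consecutive pairs of the list `l = [u_0, …, u_{2T+1}]`. -/
def chainProd {p : ℕ} (S R : Matrix (Fin p) (Fin p) ℝ) (l : List (Fin p)) : ℝ :=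
  ((l.zip l.tail).map fun q => R q.1 q.2 / Real.sqrt (S q.1 q.1 * S q.2 q.2)).prod

/-- The node sequence `u_0 = i, u_1, u_2, …, u_{2T-1}, u_{2T}, u_{2T+1} = j`, where
`(u_1,u_2), …, (u_{2T-1},u_{2T})` are the bridges traversed by the walk `W`, in order of
traversal and oriented in the direction of traversal. -/
def bridgeSeq {p : ℕ} (G : SimpleGraph (Fin p)) {i j : Fin p} (W : G.Walk i j) :
    List (Fin p) :=
  i :: (((W.darts.filter fun d => decide (G.IsBridge d.edge)).flatMap
      fun d => [d.toProd.1, d.toProd.2]) ++ [j])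

/-- On the feasible set, the penalty is linear because `|Θ i j| = -Θ i j` off the diagonal. -/
lemma objf_eq {p : ℕ} {S Λ Θ : Matrix (Fin p) (Fin p) ℝ} (hS : S.IsSymm)
    (hΛ : ∀ i, Λ i i = 0) (h : ∀ i j, i ≠ j → Θ i j ≤ 0) :
    objf S Λ Θ = -Real.log Θ.det + ∑ i, ∑ j, Θ i j * (S i j - Λ i j) := by
  unfold objf
  rw [add_assoc]
  congr 1
  simp only [Matrix.trace, Matrix.diag, Matrix.mul_apply, ← Finset.sum_add_distrib]
  refine Finset.sum_congr rfl fun i _ => Finset.sum_congr rfl fun j _ => ?_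
  rw [hS.apply i j]
  split_ifs with hij
  · subst hij
    rw [hΛ]; ring
  · rw [abs_of_nonpos (h i j hij)]; ring

lemma quad_eq {p : ℕ} (A : Matrix (Fin p) (Fin p) ℝ) (x : Fin p → ℝ) :
    x ⬝ᵥ (A *ᵥ x) = ∑ i, ∑ j, A i j * (x i * x j) := by
  simp only [dotProduct, Matrix.mulVec, Finset.mul_sum]
  exact Finset.sum_congr rfl fun i _ => Finset.sum_congr rfl fun j _ => by ring

lemma quad_pos {p : ℕ} {A : Matrix (Fin p) (Fin p) ℝ} (hA : A.PosDef) {x : Fin p → ℝ}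
    (hx : x ≠ 0) : 0 < ∑ i, ∑ j, A i j * (x i * x j) := by
  rw [← quad_eq]
  simpa using hA.dotProduct_mulVec_pos hx

/-- Raising off-diagonal entries while keeping them nonpositive preserves positive definiteness:
the quadratic form of `B` at `x` dominates that of `A` at `|x|`. -/
lemma posDef_of_le {p : ℕ} {A B : Matrix (Fin p) (Fin p) ℝ} (hA : A.PosDef) (hB : B.IsSymm)
    (hle : ∀ i j, A i j ≤ B i j) (hdiag : ∀ i, B i i = A i i)
    (hoff : ∀ i j, i ≠ j → B i j ≤ 0) : B.PosDef := by
  refine Matrix.PosDef.of_dotProduct_mulVec_pos ?_ fun x hx => ?_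
  · rw [Matrix.IsHermitian, Matrix.conjTranspose_eq_transpose_of_trivial]
    exact hB
  · have h1 : (fun i => |x i|) ≠ 0 := by
      intro h
      exact hx (funext fun i => by simpa using congrFun h i)
    have h2 := quad_pos hA h1
    rw [star_trivial, quad_eq]
    refine lt_of_lt_of_le h2 ?_
    refine Finset.sum_le_sum fun i _ => Finset.sum_le_sum fun j _ => ?_
    by_cases hij : i = j
    · subst hij
      rw [hdiag, abs_mul_abs_self]
    · calc A i j * (|x i| * |x j|) ≤ B i j * (|x i| * |x j|) :=
            mul_le_mul_of_nonneg_right (hle i j) (by positivity)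
        _ ≤ B i j * (x i * x j) := by
            rw [← abs_mul]
            exact mul_le_mul_of_nonpos_left (le_abs_self _) (hoff i j hij)

/-- If `A` is positive definite with nonpositive off-diagonal entries and `A w ≥ 0`, then
`w ≥ 0`: pairing `A w` with the negative part of `w` gives a nonpositive number unless the
negative part vanishes. -/
lemma nonneg_of_mulVec_nonneg {p : ℕ} {A : Matrix (Fin p) (Fin p) ℝ} (hA : A.PosDef)
    (hoff : ∀ i j, i ≠ j → A i j ≤ 0) {w : Fin p → ℝ} (hw : ∀ i, 0 ≤ (A *ᵥ w) i) (i : Fin p) :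
    0 ≤ w i := by
  by_contra hneg
  have hx : (fun i => max (-w i) 0) ≠ 0 := by
    intro h
    have := congrFun h i
    simp only [Pi.zero_apply] at this
    have := le_max_left (-w i) 0
    linarith
  have h1 := quad_pos hA hx
  have h2 : 0 ≤ ∑ i, max (-w i) 0 * (A *ᵥ w) i :=
    Finset.sum_nonneg fun i _ => mul_nonneg (le_max_right _ _) (hw i)
  have h3 : ∑ i, max (-w i) 0 * (A *ᵥ w) i
      ≤ ∑ i, ∑ j, -(A i j * (max (-w i) 0 * max (-w j) 0)) := by
    simp only [Matrix.mulVec, dotProduct, Finset.mul_sum]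
    refine Finset.sum_le_sum fun i _ => Finset.sum_le_sum fun j _ => ?_
    by_cases hij : i = j
    · subst hij
      rcases le_total (-w i) 0 with h | h
      · simp [max_eq_right h]
      · rw [max_eq_left h]; apply le_of_eq; ring
    · have h4 : 0 ≤ max (-w i) 0 := le_max_right _ _
      have h5 : -w j ≤ max (-w j) 0 := le_max_left _ _
      have h6 : 0 ≤ -A i j * max (-w i) 0 := mul_nonneg (by linarith [hoff i j hij]) h4
      nlinarith [mul_le_mul_of_nonneg_left h5 h6]
  simp only [Finset.sum_neg_distrib] at h3
  linarith

lemma inv_pos_of_neg {p : ℕ} {A : Matrix (Fin p) (Fin p) ℝ} (hA : A.PosDef)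
    (hoff : ∀ i j, i ≠ j → A i j ≤ 0) {i j : Fin p} (hij : i ≠ j) (hneg : A i j < 0) :
    0 < A⁻¹ i j := by
  have hdet : IsUnit A.det := hA.det_pos.ne'.isUnit
  have hcol : ∀ k, (A *ᵥ fun l => A⁻¹ l j) k = if k = j then 1 else 0 := by
    intro k
    rw [← Matrix.one_apply, ← Matrix.mul_nonsing_inv A hdet]
    rfl
  have hnn : ∀ k, 0 ≤ A⁻¹ k j := nonneg_of_mulVec_nonneg hA hoff (fun k => by
    rw [hcol]; split_ifs <;> norm_num)
  have hjj : 0 < A⁻¹ j j := hA.inv.diag_pos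
  -- Row `i` of `A * A⁻¹ = 1` gives `A i i * A⁻¹ i j = -∑ k ≠ i, A i k * A⁻¹ k j`.
  have hrow : ∑ k, A i k * A⁻¹ k j = 0 := by
    have := hcol i
    simpa [Matrix.mulVec, dotProduct, hij] using this
  rw [← Finset.add_sum_erase _ _ (Finset.mem_univ i)] at hrow
  have hsum : ∑ k ∈ Finset.univ.erase i, A i k * A⁻¹ k j < 0 := by
    refine Finset.sum_neg' (fun k hk => ?_) ⟨j, by simp [hij.symm], mul_neg_of_neg_of_pos hneg hjj⟩
    exact mul_nonpos_of_nonpos_of_nonneg (hoff i k (Finset.ne_of_mem_erase hk).symm) (hnn k)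
  exact pos_of_mul_pos_right (a := A i i) (by linarith) (hA.diag_pos).le

/-- The symmetric unit perturbation supported on the entries `(i, j)` and `(j, i)`. -/
def bump {p : ℕ} (i j : Fin p) : Matrix (Fin p) (Fin p) ℝ :=
  Matrix.single i j 1 + Matrix.single j i 1

/-- The rank-two determinant update, from the matrix determinant lemma. -/
lemma det_bump {p : ℕ} {A : Matrix (Fin p) (Fin p) ℝ} (hA : A.PosDef) (i j : Fin p) (t : ℝ) :
    (A + t • bump i j).det
      = A.det * ((1 + t * A⁻¹ i j) ^ 2 - t ^ 2 * (A⁻¹ i i * A⁻¹ j j)) := by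
  have hdet : IsUnit A.det := hA.det_pos.ne'.isUnit
  have hsymm : A⁻¹ j i = A⁻¹ i j := by
    simpa using hA.inv.isHermitian.apply i j
  let U : Matrix (Fin p) (Fin 2) ℝ := Matrix.of fun k a => ![if i = k then t else 0, if j = k then t else 0] a
  let V : Matrix (Fin 2) (Fin p) ℝ := Matrix.of fun a k => ![if j = k then 1 else 0, if i = k then 1 else 0] a
  have hUV : t • bump i j = U * V := by
    ext k l
    simp only [bump, U, V, Matrix.smul_apply, Matrix.add_apply, Matrix.single_apply,
      Matrix.mul_apply, Fin.sum_univ_two, Matrix.of_apply, smul_eq_mul]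
    simp only [Matrix.cons_val_zero, Matrix.cons_val_one]
    simp only [ite_and]
    split_ifs <;> ring
  have hent : ∀ a b, (V * A⁻¹ * U) a b = A⁻¹ (![j, i] a) (![i, j] b) * t := by
    intro a b
    fin_cases a <;> fin_cases b <;> simp [Matrix.mul_apply, U, V]
  rw [hUV, Matrix.det_add_mul _ _ hdet, Matrix.det_fin_two]
  congr 1
  simp only [Matrix.add_apply, hent]
  simp [hsymm]
  ring

/-- At an optimum, every negative off-diagonal entry sits where `S` exceeds `Λ`. -/
lemma lt_of_neg {p : ℕ} {S Λ Θ : Matrix (Fin p) (Fin p) ℝ} (hS : S.IsSymm) (hΛs : Λ.IsSymm)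
    (hΛ : ∀ i, Λ i i = 0) (hmem : MSet Θ)
    (hmin : ∀ Θ', MSet Θ' → objf S Λ Θ ≤ objf S Λ Θ') {i j : Fin p} (hij : i ≠ j)
    (hneg : Θ i j < 0) : Λ i j < S i j := by
  obtain ⟨hsym, hpd, hoff⟩ := hmem
  by_contra hle
  push Not at hle
  have hw := inv_pos_of_neg hpd hoff hij hneg
  have hab : 0 < Θ⁻¹ i i * Θ⁻¹ j j := mul_pos hpd.inv.diag_pos hpd.inv.diag_pos
  -- `t ≤ -Θ i j` keeps feasibility; the other bound makes the determinant increase.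
  obtain ⟨t, ht0, ht1, ht2⟩ : ∃ t : ℝ, 0 < t ∧ t ≤ -Θ i j ∧
      t * (Θ⁻¹ i i * Θ⁻¹ j j) ≤ Θ⁻¹ i j := by
    refine ⟨min (-Θ i j) (Θ⁻¹ i j / (Θ⁻¹ i i * Θ⁻¹ j j)),
      lt_min (by linarith) (div_pos hw hab), min_le_left _ _, ?_⟩
    exact (le_div_iff₀ hab).1 (min_le_right _ _)
  have hsymB : (Θ + t • bump i j).IsSymm := by
    refine hsym.add (Matrix.IsSymm.smul ?_ t)
    simp [Matrix.IsSymm, bump, Matrix.transpose_add, Matrix.transpose_single, add_comm]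
  have happ : ∀ k l, (Θ + t • bump i j) k l
      = Θ k l + ((if i = k ∧ j = l then t else 0) + if j = k ∧ i = l then t else 0) := by
    intro k l
    simp [bump, Matrix.single_apply]
  have hoffB : ∀ k l, k ≠ l → (Θ + t • bump i j) k l ≤ 0 := by
    intro k l hkl
    rw [happ]
    have h1 := hoff k l hkl
    have h2 := hsym.apply i j
    by_cases ha : i = k ∧ j = l
    · obtain ⟨rfl, rfl⟩ := ha
      simp [hij.symm]
      linarith
    · by_cases hb : j = k ∧ i = l
      · obtain ⟨rfl, rfl⟩ := hb
        simp [hij]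
        linarith
      · simpa [ha, hb] using h1
  have hpdB : (Θ + t • bump i j).PosDef := by
    refine posDef_of_le hpd hsymB (fun k l => ?_) (fun k => ?_) hoffB
    · rw [happ]
      have h1 : 0 ≤ if i = k ∧ j = l then t else 0 := by split_ifs <;> linarith
      have h2 : 0 ≤ if j = k ∧ i = l then t else 0 := by split_ifs <;> linarith
      linarith
    · rw [happ, if_neg (by rintro ⟨rfl, h⟩; exact hij h.symm),
        if_neg (by rintro ⟨rfl, h⟩; exact hij h)]
      ring
  have hobj := hmin _ ⟨hsymB, hpdB, hoffB⟩
  rw [objf_eq hS hΛ hoff, objf_eq hS hΛ hoffB] at hobj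
  have hlin : ∑ k, ∑ l, (Θ + t • bump i j) k l * (S k l - Λ k l)
      = ∑ k, ∑ l, Θ k l * (S k l - Λ k l) + 2 * t * (S i j - Λ i j) := by
    simp only [happ, add_mul, Finset.sum_add_distrib, ite_and, ite_mul, zero_mul,
      Finset.sum_ite_eq, Finset.mem_univ, if_true, Finset.sum_ite_irrel,
      Finset.sum_const_zero]
    rw [hS.apply i j, hΛs.apply i j]
    ring
  have hdet : Θ.det < (Θ + t • bump i j).det := by
    rw [det_bump hpd]
    refine lt_mul_of_one_lt_right hpd.det_pos ?_
    nlinarith [mul_le_mul_of_nonneg_left ht2 ht0.le, mul_pos ht0 hw, sq_nonneg (t * Θ⁻¹ i j)]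
  have hlog := Real.log_lt_log hpd.det_pos hdet
  rw [hlin] at hobj
  nlinarith [mul_nonneg ht0.le (sub_nonneg.2 hle)]

/-- acyclic thresholded graph implies acyclic optimal graph. -/
theorem stmt_7 {p : ℕ} (hp : 1 ≤ p)
    (S Λ : Matrix (Fin p) (Fin p) ℝ)
    (hSsymm : S.IsSymm) (hΛsymm : Λ.IsSymm)
    (hSdiag : ∀ i, 0 < S i i) (hΛnn : ∀ i j, 0 ≤ Λ i j) (hΛdiag : ∀ i, Λ i i = 0)
    (hA1 : ∀ i j, i ≠ j → S i j < Real.sqrt (S i i * S j j))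
    (Θstar : Matrix (Fin p) (Fin p) ℝ)
    (hmem : MSet Θstar)
    (hmin : ∀ Θ' : Matrix (Fin p) (Fin p) ℝ, MSet Θ' → objf S Λ Θstar ≤ objf S Λ Θ')
    (hacyclic : (suppG (thresh S Λ)).IsAcyclic) :
    (suppG Θstar).IsAcyclic := by
  refine hacyclic.anti fun i j h => ?_
  have key : ∀ {a b : Fin p}, a ≠ b → Θstar a b ≠ 0 → thresh S Λ a b ≠ 0 := by
    intro a b hab hne
    have hlt := lt_of_neg hSsymm hΛsymm hΛdiag hmem hmin hab
      (lt_of_le_of_ne (hmem.2.2 a b hab) hne)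
    simp only [thresh, Matrix.of_apply, if_pos (And.intro hab hlt)]
    exact (sub_pos.2 hlt).ne'
  simp only [suppG, SimpleGraph.fromRel_adj] at h ⊢
  exact ⟨h.1, h.2.imp (key h.1) (key h.1.symm)⟩
end
end

section
/- Define the p×p symmetric matrix Θ by: Θ_ii = [Θ̂_k]_{π(i),π(i)} + ζ_i for i ∈ V_k; Θ_ij = [Θ̂_k]_{π(i),π(j)} for i ≠ j with i, j ∈ V_k; Θ_ij = −T_ij / (S_ii·S_jj − T_ij²) whenever (i,j) is a bridge of G; and Θ_ij = 0 otherwise. If Θ is positive definite and, with R = Θ^{-1}, the inequality |S_ij − R_ij| ≤ Λ_ij holds for every pair i ≠ j with ψ(i) ≠ ψ(j), then Θ minimizes the graphical lasso objective h over all p×p symmetric positive definite matrices. -/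
/-!
The objective is convex, so `Θ` is a minimizer as soon as `R = Θ⁻¹` satisfies the subgradient
conditions `GLKKT`: `R` has the diagonal of `S`, `|S - R| ≤ Λ` off the diagonal, and `R - S` is
`Λ` times the sign of `Θ` where `Θ ≠ 0` (`GLKKT.isMin`). Conversely, each block minimizer satisfies
the conditions for its subproblem (`GLKKT.of_isMin`). Both directions rest on the tangent inequality
for `log det` (`log_det_sub_le`).

It remains to know `Θ⁻¹` inside the blocks and on the bridges. Start from the block diagonal matrix
of the block minimizers, whose inverse has diagonal `S i i`, and add the bridges one at a time.
Adding the bridge `s(a, b)` adds a matrix supported on `{a, b}`, and it changes the inverse from `R` to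
`R + T a b / (S a a * S b b) • R (e_a e_bᵀ + e_b e_aᵀ) R` (`bridge_update`). As `a` and `b` are not
connected before this step, the correction vanishes on all pairs connected so far, and the new
`(a, b)` entry is `T a b`. Hence (`exists_inverse`) `Θ⁻¹` coincides with the inverse of the block
minimizer on each block, where the conditions are inherited, and with `T` on the bridges, where
`T - S = -Λ sign T` and `Θ` has the sign of `-T`. On the remaining pairs `Θ` is zero and the
conditions are the assumed bound `|S - R| ≤ Λ`.
-/

attribute [local instance] Classical.propDecidable

noncomputable section

open Matrix

/-! ### Tangent inequality for the log-determinant -/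

/-- Sum of `log x ≤ x - 1` over the eigenvalues. -/
lemma log_det_le_trace {n : Type*} [Fintype n] [DecidableEq n] {A : Matrix n n ℝ}
    (hA : A.PosDef) : Real.log A.det ≤ A.trace - Fintype.card n := by
  have hpos := hA.eigenvalues_pos
  have hd := hA.1.det_eq_prod_eigenvalues
  have ht := hA.1.trace_eq_sum_eigenvalues
  simp only [RCLike.ofReal_real_eq_id, id_eq] at hd ht
  rw [hd, ht, Real.log_prod (fun i _ => (hpos i).ne')]
  calc _ ≤ ∑ i, (hA.1.eigenvalues i - 1) :=
        Finset.sum_le_sum fun i _ => Real.log_le_sub_one_of_pos (hpos i)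
    _ = _ := by simp

open scoped MatrixOrder in
lemma exists_eq_conjTranspose_mul_self {n : Type*} [Fintype n] [DecidableEq n]
    {A : Matrix n n ℝ} (hA : A.PosSemidef) : ∃ D : Matrix n n ℝ, A = Dᴴ * D :=
  CStarAlgebra.nonneg_iff_eq_star_mul_self.mp hA.nonneg

/-- Concavity of `log det`: the graph lies below its tangent plane at `A`. Writing `A⁻¹ = Dᴴ D`,
this is `log_det_le_trace` applied to `D B Dᴴ`. -/
lemma log_det_sub_le {n : Type*} [Fintype n] [DecidableEq n] {A B : Matrix n n ℝ}
    (hA : A.PosDef) (hB : B.PosDef) :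
    Real.log B.det - Real.log A.det ≤ (A⁻¹ * (B - A)).trace := by
  obtain ⟨D, hD⟩ := exists_eq_conjTranspose_mul_self hA.inv.posSemidef
  have hdetA := hA.det_pos
  have hdetB := hB.det_pos
  have hdetD : D.det * D.det = A.det⁻¹ := by
    have := congrArg Matrix.det hD
    rw [Matrix.det_nonsing_inv, Ring.inverse_eq_inv'] at this
    simpa [Matrix.det_conjTranspose] using this.symm
  have hDu : IsUnit D := by
    rw [Matrix.isUnit_iff_isUnit_det, isUnit_iff_ne_zero]
    intro h
    rw [h] at hdetD
    have := inv_pos.mpr hdetA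
    simp at hdetD; linarith
  have hP : (D * B * Dᴴ).PosDef :=
    hB.mul_mul_conjTranspose_same (Matrix.vecMul_injective_of_isUnit hDu)
  have h := log_det_le_trace hP
  have hdet : (D * B * Dᴴ).det = B.det / A.det := by
    rw [Matrix.det_mul, Matrix.det_mul, Matrix.det_conjTranspose, star_trivial, div_eq_mul_inv,
      ← hdetD]; ring
  have htr : (D * B * Dᴴ).trace = (A⁻¹ * B).trace := by
    rw [Matrix.trace_mul_comm, ← Matrix.mul_assoc, ← hD]
  rw [hdet, Real.log_div hdetB.ne' hdetA.ne', htr] at h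
  rw [Matrix.mul_sub, Matrix.nonsing_inv_mul _ (isUnit_iff_ne_zero.mpr hdetA.ne'),
    Matrix.trace_sub, Matrix.trace_one]
  exact h

/-- Positive definiteness is an open condition along a line, by compactness of the unit sphere
(any norm will do, so the sup norm of `n → ℝ` is used). -/
lemma posDef_perturb {n : Type*} [Fintype n] [DecidableEq n] {A E : Matrix n n ℝ}
    (hA : A.PosDef) (hE : E.IsSymm) : ∀ᶠ t : ℝ in nhds 0, (A + t • E).PosDef := by
  have key : ∀ᶠ t : ℝ in nhds 0, ∀ x ∈ Metric.sphere (0 : n → ℝ) 1,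
      0 < x ⬝ᵥ ((A + t • E) *ᵥ x) := by
    refine (isCompact_sphere _ _).eventually_forall_of_forall_eventually fun x hx => ?_
    have hc : Continuous fun q : ℝ × (n → ℝ) => q.2 ⬝ᵥ ((A + q.1 • E) *ᵥ q.2) := by
      fun_prop
    refine hc.continuousAt.eventually (lt_mem_nhds ?_)
    have hx0 : x ≠ 0 := by
      rintro rfl
      simp at hx
    simpa using hA.dotProduct_mulVec_pos hx0
  filter_upwards [key] with t ht
  refine Matrix.PosDef.of_dotProduct_mulVec_pos ?_ fun {x} hx => ?_
  · have hE' : E.IsHermitian := by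
      rw [Matrix.IsHermitian, Matrix.conjTranspose_eq_transpose_of_trivial]; exact hE
    exact hA.1.add (hE'.smul (star_trivial t))
  · have hn : 0 < ‖x‖ := norm_pos_iff.mpr hx
    have := ht (‖x‖⁻¹ • x) (by simp [norm_smul, hn.ne'])
    rw [Matrix.mulVec_smul, smul_dotProduct, dotProduct_smul, smul_eq_mul, smul_eq_mul] at this
    have h2 := (inv_pos.mpr hn)
    rw [star_trivial]
    exact pos_of_mul_pos_right (pos_of_mul_pos_right this h2.le) h2.le

/-! ### Optimality conditions -/

lemma trace_mul_eq_sum {n : Type*} [Fintype n] (A B : Matrix n n ℝ) (hB : B.IsSymm) :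
    (A * B).trace = ∑ i, ∑ j, A i j * B i j := by
  simp only [Matrix.trace, Matrix.diag, Matrix.mul_apply]
  exact Finset.sum_congr rfl fun i _ => Finset.sum_congr rfl fun j _ => by rw [hB.apply]

lemma isSymm_inv {n : Type*} [Fintype n] [DecidableEq n] {A : Matrix n n ℝ} (hA : A.IsSymm) :
    A⁻¹.IsSymm := by
  rw [Matrix.IsSymm, Matrix.transpose_nonsing_inv, hA.eq]

/-- First-order optimality conditions for the graphical lasso at `Θ`, with `R` standing for `Θ⁻¹`.
The subgradient condition off the diagonal is encoded without signs: together with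
`|S i j - R i j| ≤ Λ i j`, the inequality `Λ i j * |Θ i j| ≤ (R i j - S i j) * Θ i j` says that
`R i j - S i j = Λ i j * sign (Θ i j)` when `Θ i j ≠ 0`, and it is void when `Θ i j = 0`. -/
def GLKKT {n : Type*} (S Λ Θ R : Matrix n n ℝ) : Prop :=
  (∀ i, R i i = S i i) ∧ ∀ i j, i ≠ j → |S i j - R i j| ≤ Λ i j ∧
    Λ i j * |Θ i j| ≤ (R i j - S i j) * Θ i j

lemma GLKKT.isMin {n : Type*} [Fintype n] [DecidableEq n] {S Λ Θ : Matrix n n ℝ}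
    (hS : S.IsSymm) (hΘs : Θ.IsSymm) (hΘ : Θ.PosDef) (hK : GLKKT S Λ Θ Θ⁻¹)
    (Θ' : Matrix n n ℝ) (hΘ' : Θ'.PosDef) : objf S Λ Θ ≤ objf S Λ Θ' := by
  have h1 := log_det_sub_le hΘ hΘ'
  rw [Matrix.trace_mul_comm, trace_mul_eq_sum _ _ (isSymm_inv hΘs)] at h1
  rw [objf, objf, trace_mul_eq_sum _ _ hS, trace_mul_eq_sum _ _ hS]
  have h2 : (∑ i, ∑ j, (Θ' - Θ) i j * Θ⁻¹ i j) + (∑ i, ∑ j, Θ i j * S i j)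
      + (∑ i, ∑ j, if i = j then 0 else Λ i j * |Θ i j|)
      ≤ (∑ i, ∑ j, Θ' i j * S i j) + ∑ i, ∑ j, if i = j then 0 else Λ i j * |Θ' i j| := by
    simp only [← Finset.sum_add_distrib]
    refine Finset.sum_le_sum fun i _ => Finset.sum_le_sum fun j _ => ?_
    rw [Matrix.sub_apply]
    by_cases hij : i = j
    · subst hij
      rw [hK.1 i]; simp; linarith
    · obtain ⟨ha, hb⟩ := hK.2 i j hij
      rw [if_neg hij, if_neg hij]
      have h3 : (Θ⁻¹ i j - S i j) * Θ' i j ≤ Λ i j * |Θ' i j| := by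
        calc _ ≤ |(Θ⁻¹ i j - S i j) * Θ' i j| := le_abs_self _
          _ = |S i j - Θ⁻¹ i j| * |Θ' i j| := by rw [abs_mul, abs_sub_comm]
          _ ≤ _ := by gcongr
      linarith
  linarith

/-- First-order inequality at a minimizer in a symmetric direction `E` along which the penalty
grows at rate at most `c`. The log-determinant is bounded by its tangent at the perturbed point,
after which one divides by `t` and lets `t → 0⁺`; no derivative of `log det` is needed. -/
lemma first_order {n : Type*} [Fintype n] [DecidableEq n] {S Λ Θ : Matrix n n ℝ}
    (hΘs : Θ.IsSymm) (hΘ : Θ.PosDef)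
    (hmin : ∀ Θ' : Matrix n n ℝ, Θ'.IsSymm → Θ'.PosDef → objf S Λ Θ ≤ objf S Λ Θ')
    {E : Matrix n n ℝ} (hE : E.IsSymm) (c : ℝ)
    (hc : ∀ t : ℝ, 0 < t → t ≤ 1 →
      (∑ i, ∑ j, if i = j then 0 else Λ i j * |(Θ + t • E) i j|) ≤
        (∑ i, ∑ j, if i = j then 0 else Λ i j * |Θ i j|) + t * c) :
    0 ≤ (E * S).trace - (Θ⁻¹ * E).trace + c := by
  have hev : ∀ᶠ t : ℝ in nhdsWithin 0 (Set.Ioi 0),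
      0 ≤ (E * S).trace - ((Θ + t • E)⁻¹ * E).trace + c := by
    have h1 : ∀ᶠ t : ℝ in nhdsWithin 0 (Set.Ioi 0), t ≤ 1 :=
      nhdsWithin_le_nhds (Iic_mem_nhds one_pos)
    filter_upwards [self_mem_nhdsWithin, h1, nhdsWithin_le_nhds (posDef_perturb hΘ hE)]
      with t ht ht1 hP
    have hm := hmin _ (hΘs.add (hE.smul t)) hP
    have hl := log_det_sub_le hP hΘ
    have hp := hc t ht ht1
    rw [objf, objf, Matrix.add_mul, Matrix.trace_add, Matrix.smul_mul, Matrix.trace_smul,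
      smul_eq_mul] at hm
    rw [sub_add_cancel_left, Matrix.mul_neg, Matrix.trace_neg, Matrix.mul_smul,
      Matrix.trace_smul, smul_eq_mul] at hl
    have : 0 ≤ t * ((E * S).trace - ((Θ + t • E)⁻¹ * E).trace + c) := by linarith
    exact nonneg_of_mul_nonneg_right this ht
  have hcont : Filter.Tendsto (fun t : ℝ => (E * S).trace - ((Θ + t • E)⁻¹ * E).trace + c)
      (nhdsWithin 0 (Set.Ioi 0)) (nhds ((E * S).trace - (Θ⁻¹ * E).trace + c)) := by
    have hinv : ContinuousAt (fun t : ℝ => (Θ + t • E)⁻¹) 0 := by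
      simp only [Matrix.inv_def, Ring.inverse_eq_inv']
      have hdet : Continuous fun t : ℝ => (Θ + t • E).det := by fun_prop
      have hadj : Continuous fun t : ℝ => (Θ + t • E).adjugate := by fun_prop
      refine (hdet.continuousAt.inv₀ ?_).smul hadj.continuousAt
      simpa using hΘ.det_pos.ne'
    have : ContinuousAt (fun t : ℝ => (E * S).trace - ((Θ + t • E)⁻¹ * E).trace + c) 0 := by
      have h3 : Continuous fun M : Matrix n n ℝ => (M * E).trace := by fun_prop
      exact (continuousAt_const.sub (h3.continuousAt.comp hinv)).add continuousAt_const
    have h4 := this.tendsto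
    simp only [zero_smul, add_zero] at h4
    exact h4.mono_left nhdsWithin_le_nhds
  exact ge_of_tendsto hcont hev

lemma GLKKT.of_isMin {n : Type*} [Fintype n] [DecidableEq n] {S Λ Θ : Matrix n n ℝ}
    (hS : S.IsSymm) (hΛ : Λ.IsSymm) (hΛnn : ∀ i j, 0 ≤ Λ i j)
    (hΘs : Θ.IsSymm) (hΘ : Θ.PosDef)
    (hmin : ∀ Θ' : Matrix n n ℝ, Θ'.IsSymm → Θ'.PosDef → objf S Λ Θ ≤ objf S Λ Θ') :
    GLKKT S Λ Θ Θ⁻¹ := by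
  have hWs := isSymm_inv hΘs
  refine ⟨fun i => ?_, fun i j hij => ?_⟩
  · have hs : ∀ s : ℝ, 0 ≤ s * (S i i - Θ⁻¹ i i) := by
      intro s
      have hE : (Matrix.single i i s).IsSymm := by
        rw [Matrix.IsSymm, Matrix.transpose_single]
      have := first_order hΘs hΘ hmin hE 0 ?_
      · simp only [Matrix.trace_mul_comm Θ⁻¹] at this
        simp only [Matrix.trace_single_mul] at this
        simp at this
        linarith
      · intro t _ _
        rw [mul_zero, add_zero]
        refine (Finset.sum_congr rfl fun a _ => Finset.sum_congr rfl fun b _ => ?_).le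
        by_cases hab : a = b
        · simp [hab]
        · rw [if_neg hab, if_neg hab, Matrix.add_apply, Matrix.smul_apply,
            Matrix.single_apply_of_ne]
          · simp
          · rintro ⟨rfl, rfl⟩; exact hab rfl
    have h1 := hs 1
    have h2 := hs (-1)
    linarith
  · have hs : ∀ s c : ℝ, (∀ t : ℝ, 0 < t → t ≤ 1 → |Θ i j + t * s| ≤ |Θ i j| + t * c) →
        0 ≤ s * (S i j - Θ⁻¹ i j) + Λ i j * c := by
      intro s c hsc
      have hE : (Matrix.single i j s + Matrix.single j i s).IsSymm := by
        rw [Matrix.IsSymm, Matrix.transpose_add, Matrix.transpose_single, Matrix.transpose_single,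
          add_comm]
      have := first_order hΘs hΘ hmin hE (2 * (Λ i j * c)) ?_
      · rw [Matrix.trace_mul_comm Θ⁻¹] at this
        simp only [Matrix.add_mul, Matrix.trace_add, Matrix.trace_single_mul] at this
        simp only [smul_eq_mul, hS.apply i j, hWs.apply i j] at this
        linarith
      · intro t ht ht1
        have hpt : ∀ a b, (if a = b then 0 else
            Λ a b * |(Θ + t • (Matrix.single i j s + Matrix.single j i s)) a b|) ≤
            (if a = b then 0 else Λ a b * |Θ a b|) +
            ((if a = i then (if b = j then t * (Λ i j * c) else 0) else 0) +
             (if a = j then (if b = i then t * (Λ i j * c) else 0) else 0)) := by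
          intro a b
          have hb := mul_le_mul_of_nonneg_left (hsc t ht ht1) (hΛnn i j)
          simp only [Matrix.add_apply, Matrix.smul_apply, Matrix.single_apply, smul_eq_mul]
          by_cases h1 : a = i ∧ b = j
          · obtain ⟨rfl, rfl⟩ := h1
            simp only [and_self, if_true, if_neg hij, if_neg (Ne.symm hij)]
            simp [hij, Ne.symm hij]
            linarith
          · by_cases h2 : a = j ∧ b = i
            · obtain ⟨rfl, rfl⟩ := h2
              rw [hΛ.apply b a, hΘs.apply b a]
              simp [hij, Ne.symm hij]
              linarith
            · have e1 : ¬ (i = a ∧ j = b) := fun h => h1 ⟨h.1.symm, h.2.symm⟩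
              have e2 : ¬ (j = a ∧ i = b) := fun h => h2 ⟨h.1.symm, h.2.symm⟩
              simp only [e1, e2, if_false, ← ite_and, h1, h2]
              simp
        refine (Finset.sum_le_sum fun a _ => Finset.sum_le_sum fun b _ => hpt a b).trans ?_
        simp only [Finset.sum_add_distrib]
        simp
        linarith
    refine ⟨abs_le.mpr ?_, ?_⟩
    · have h1 := hs 1 1 fun t ht _ => by
        have := abs_add_le (Θ i j) (t * 1)
        rwa [abs_of_pos (show 0 < t * 1 by linarith)] at this
      have h2 := hs (-1) 1 fun t ht _ => by
        have := abs_add_le (Θ i j) (t * (-1))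
        rwa [abs_of_neg (show t * (-1) < 0 by linarith),
          show -(t * -1) = t * 1 by ring] at this
      constructor <;> linarith
    -- shrinking the entry `Θ i j` towards `0` moves `|Θ i j|` linearly
    · have h3 := hs (-Θ i j) (-|Θ i j|) fun t ht ht1 => by
        rw [show Θ i j + t * -Θ i j = (1 - t) * Θ i j by ring, abs_mul,
          abs_of_nonneg (sub_nonneg.mpr ht1)]
        linarith
      linarith

/-! ### Adding bridges to a block diagonal matrix -/

lemma single_mul_entry {n : Type*} [Fintype n] [DecidableEq n] (X : Matrix n n ℝ) (x : ℝ)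
    (c d i j : n) : (Matrix.single c d x * X) i j = if i = c then x * X d j else 0 := by
  split_ifs with h
  · subst h; simp
  · rw [Matrix.single_mul_apply_of_ne _ _ _ _ _ h]

/-- Entries of `R (e_a e_bᵀ + e_b e_aᵀ) R`. -/
lemma cross_entry {n : Type*} [Fintype n] [DecidableEq n] (R : Matrix n n ℝ) (a b i j : n) :
    (R * (Matrix.single a b (1 : ℝ) + Matrix.single b a (1 : ℝ)) * R) i j
      = R i a * R b j + R i b * R a j := by
  rw [Matrix.mul_assoc, Matrix.mul_apply]
  simp [Matrix.add_mul, single_mul_entry, mul_add, Finset.sum_add_distrib]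

/-- Inverse of the matrix obtained by adding one bridge term `Q` between `a` and `b`, when the
inverse `R` of `A` does not couple `a` and `b`. Woodbury's formula simplifies because the restriction
of `Q` to `{a, b}` is `[[α, t], [t, β]]⁻¹ - diag(α, β)⁻¹`. -/
lemma bridge_update {n : Type*} [Fintype n] [DecidableEq n] {A R Q : Matrix n n ℝ}
    (hAR : A * R = 1) (hRs : R.IsSymm) {a b : n} (hab : R a b = 0) {t α β : ℝ}
    (ha : R a a = α) (hb : R b b = β) (hα : α ≠ 0) (hβ : β ≠ 0) (hδ : α * β - t ^ 2 ≠ 0)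
    (hQ : Q = Matrix.single a a (1 / α * (t ^ 2 / (α * β - t ^ 2)))
      + Matrix.single b b (1 / β * (t ^ 2 / (α * β - t ^ 2)))
      + Matrix.single a b (-t / (α * β - t ^ 2)) + Matrix.single b a (-t / (α * β - t ^ 2))) :
    (A + Q) * (R + (t / (α * β)) • (R * (Matrix.single a b (1 : ℝ) + Matrix.single b a (1 : ℝ)) * R)) = 1 := by
  subst ha hb
  have hba : R b a = 0 := by rw [hRs.apply]; exact hab
  have e1 : A * (R * (Matrix.single a b (1 : ℝ) + Matrix.single b a (1 : ℝ)) * R) =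
      (Matrix.single a b (1 : ℝ) + Matrix.single b a (1 : ℝ)) * R := by
    rw [← Matrix.mul_assoc, ← Matrix.mul_assoc, hAR, Matrix.one_mul]
  rw [Matrix.add_mul, Matrix.mul_add, Matrix.mul_smul, e1, hAR, add_assoc, add_eq_left]
  ext i j
  subst hQ
  simp only [Matrix.add_mul, Matrix.add_apply, Matrix.smul_apply, smul_eq_mul, single_mul_entry, cross_entry,
    Matrix.zero_apply]
  rw [hab, hba]
  have hne : a ≠ b := by
    rintro rfl
    exact hα hab
  by_cases h1 : i = a
  · subst h1
    simp only [if_true, if_neg hne]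
    field_simp
    ring
  · by_cases h2 : i = b
    · subst h2
      simp only [if_true, if_neg h1]
      field_simp
      ring
    · simp [h1, h2]

/-- The contribution of a single bridge `e = s(a, b)` to the decomposed matrix: the off-diagonal
entries at `(a, b)` and `(b, a)`, and the share of `ζ` it contributes at `(a, a)` and `(b, b)`. -/
def bridgeTerm {p : ℕ} (S T : Matrix (Fin p) (Fin p) ℝ) (e : Sym2 (Fin p)) :
    Matrix (Fin p) (Fin p) ℝ :=
  Matrix.of fun i j =>
    if i = j then
      1 / S i i * ∑ m, if s(i, m) = e then T i m ^ 2 / (S i i * S m m - T i m ^ 2) else 0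
    else if s(i, j) = e then -T i j / (S i i * S j j - T i j ^ 2) else 0

lemma bridgeTerm_mk {p : ℕ} {S T : Matrix (Fin p) (Fin p) ℝ} (hT : T.IsSymm) {a b : Fin p}
    (hab : a ≠ b) : bridgeTerm S T s(a, b) =
      Matrix.single a a (1 / S a a * (T a b ^ 2 / (S a a * S b b - T a b ^ 2)))
      + Matrix.single b b (1 / S b b * (T a b ^ 2 / (S a a * S b b - T a b ^ 2)))
      + Matrix.single a b (-T a b / (S a a * S b b - T a b ^ 2))
      + Matrix.single b a (-T a b / (S a a * S b b - T a b ^ 2)) := by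
  ext i j
  simp only [bridgeTerm, Matrix.of_apply, Matrix.add_apply, Matrix.single_apply, Sym2.eq_iff]
  by_cases hij : i = j
  · subst hij
    by_cases ha : i = a
    · subst ha
      have hba := Ne.symm hab
      simp [hab, hba]
    · by_cases hb : i = b
      · subst hb
        simp [ha, hab, hT.apply a i, mul_comm (S i i) (S a a)]
      · simp [ha, hb, Ne.symm ha, Ne.symm hb]
  · by_cases h1 : i = a ∧ j = b
    · obtain ⟨rfl, rfl⟩ := h1
      simp [hij, Ne.symm hij]
    · by_cases h2 : i = b ∧ j = a
      · obtain ⟨rfl, rfl⟩ := h2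
        simp [hij, Ne.symm hij, hT.apply j i, mul_comm (S i i) (S j j)]
      · have e1 : ¬ (a = i ∧ b = j) := fun h => h1 ⟨h.1.symm, h.2.symm⟩
        have e2 : ¬ (b = i ∧ a = j) := fun h => h2 ⟨h.1.symm, h.2.symm⟩
        have e3 : ¬ (a = i ∧ a = j) := fun h => hij (h.1.symm.trans h.2)
        have e4 : ¬ (b = i ∧ b = j) := fun h => hij (h.1.symm.trans h.2)
        simp [hij, h1, h2, e1, e2, e3, e4]

lemma not_bridge_of_reachable {V : Type*} {G : SimpleGraph V} {i j : V}
    (h : (bridgeDeleted G).Reachable i j) : ¬ G.IsBridge s(i, j) := by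
  intro hb
  refine SimpleGraph.isBridge_iff.mp hb (h.mono ?_)
  refine SimpleGraph.deleteEdges_anti (Set.singleton_subset_iff.mpr hb)

/-- Inverting the block diagonal part `M` plus the terms of any set `F` of genuine bridge edges.
The inverse agrees with `R₀ = M⁻¹` inside the blocks and with `T` on `F`, and it vanishes between
vertices not joined by blocks and edges of `F`. The last property drives the induction on `F`: a
new bridge joins two vertices not yet joined, so the correction from `bridge_update` only
affects pairs that become joined by it. -/
lemma exists_inverse {p : ℕ} {S T M R₀ : Matrix (Fin p) (Fin p) ℝ} (hT : T.IsSymm)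
    (hS : ∀ i, 0 < S i i) (hTS : ∀ i j, i ≠ j → T i j ^ 2 < S i i * S j j)
    (G : SimpleGraph (Fin p)) (hMR : M * R₀ = 1) (hR₀s : R₀.IsSymm)
    (hR₀z : ∀ i j, ¬ (bridgeDeleted G).Reachable i j → R₀ i j = 0)
    (hR₀d : ∀ i, R₀ i i = S i i)
    (F : Finset (Sym2 (Fin p))) (hF : ∀ e ∈ F, e ∈ G.edgeSet ∧ G.IsBridge e) :
    ∃ R : Matrix (Fin p) (Fin p) ℝ, (M + ∑ e ∈ F, bridgeTerm S T e) * R = 1 ∧ R.IsSymm ∧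
      (∀ i j, ¬ (bridgeDeleted G ⊔ SimpleGraph.fromEdgeSet (F : Set (Sym2 (Fin p)))).Reachable i j →
        R i j = 0) ∧
      (∀ i j, (bridgeDeleted G).Reachable i j → R i j = R₀ i j) ∧
      (∀ i j, s(i, j) ∈ F → R i j = T i j) := by
  induction F using Finset.induction_on with
  | empty => exact ⟨R₀, by simpa using hMR, hR₀s, by simpa using hR₀z, fun _ _ _ => rfl, by simp⟩
  | insert e F heF ih =>
    obtain ⟨R, hAR, hRs, hRz, hRb, hRT⟩ := ih fun e he => hF e (Finset.mem_insert_of_mem he)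
    obtain ⟨heG, heB⟩ := hF e (Finset.mem_insert_self _ _)
    induction e using Sym2.ind with
    | _ a b =>
    set H := bridgeDeleted G ⊔ SimpleGraph.fromEdgeSet (F : Set (Sym2 (Fin p))) with hH
    set H' := bridgeDeleted G ⊔
      SimpleGraph.fromEdgeSet ((insert s(a, b) F : Finset _) : Set (Sym2 (Fin p))) with hH'
    have hne : a ≠ b := SimpleGraph.Adj.ne heG
    have hHH' : H ≤ H' :=
      sup_le_sup le_rfl (SimpleGraph.fromEdgeSet_mono (by simp))
    have hab' : H'.Reachable a b := by
      refine SimpleGraph.Adj.reachable (Or.inr ?_)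
      rw [SimpleGraph.fromEdgeSet_adj]
      exact ⟨by simp, hne⟩
    -- `H` is contained in `G` with the bridge `s(a, b)` removed
    have hnr : ¬ H.Reachable a b := by
      intro h
      refine SimpleGraph.isBridge_iff.mp heB (h.mono (sup_le ?_ ?_))
      · exact SimpleGraph.deleteEdges_anti (Set.singleton_subset_iff.mpr heB)
      · intro x y hxy
        rw [SimpleGraph.fromEdgeSet_adj] at hxy
        rw [SimpleGraph.deleteEdges_adj]
        refine ⟨(hF _ (Finset.mem_insert_of_mem hxy.1)).1, ?_⟩
        rintro h
        rw [Set.mem_singleton_iff] at h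
        exact heF (h ▸ hxy.1)
    have hRa : R a a = S a a := by rw [hRb a a (SimpleGraph.Reachable.refl _), hR₀d]
    have hRbb : R b b = S b b := by rw [hRb b b (SimpleGraph.Reachable.refl _), hR₀d]
    have hRab : R a b = 0 := hRz a b hnr
    have hRba : R b a = 0 := by rw [hRs.apply]; exact hRab
    have hsupp : ∀ i j, R i j ≠ 0 → H.Reachable i j := fun i j h => by
      by_contra h'
      exact h (hRz i j h')
    have hform : ∀ i j, (R + (T a b / (S a a * S b b)) •
        (R * (Matrix.single a b (1 : ℝ) + Matrix.single b a (1 : ℝ)) * R)) i j =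
        R i j + T a b / (S a a * S b b) * (R i a * R b j + R i b * R a j) := by
      intro i j
      rw [Matrix.add_apply, Matrix.smul_apply, smul_eq_mul, cross_entry]
    -- the correction vanishes on pairs already joined in `H`
    have hsame : ∀ i j, H.Reachable i j → R i a * R b j + R i b * R a j = 0 := by
      intro i j hij
      have h1 : R i a * R b j = 0 := by
        by_contra h
        exact hnr (((hsupp _ _ (left_ne_zero_of_mul h)).symm.trans hij).trans
          (hsupp _ _ (right_ne_zero_of_mul h)).symm)
      have h2 : R i b * R a j = 0 := by
        by_contra h
        exact hnr ((hsupp _ _ (right_ne_zero_of_mul h)).trans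
          (hij.symm.trans (hsupp _ _ (left_ne_zero_of_mul h))))
      rw [h1, h2, add_zero]
    refine ⟨R + (T a b / (S a a * S b b)) •
        (R * (Matrix.single a b (1 : ℝ) + Matrix.single b a (1 : ℝ)) * R), ?_, ?_, ?_, ?_, ?_⟩
    · rw [Finset.sum_insert heF, add_comm (bridgeTerm S T s(a, b)), ← add_assoc]
      exact bridge_update hAR hRs hRab hRa hRbb (hS a).ne' (hS b).ne'
        (sub_pos.mpr (hTS a b hne)).ne' (bridgeTerm_mk hT hne)
    · refine Matrix.IsSymm.ext fun i j => ?_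
      rw [hform, hform, hRs.apply i j, hRs.apply j a, hRs.apply b i, hRs.apply j b, hRs.apply a i]
      ring
    · intro i j hij
      have h0 : R i j = 0 := hRz i j fun h => hij (h.mono hHH')
      have h1 : R i a * R b j = 0 := by
        by_contra h
        exact hij ((((hsupp _ _ (left_ne_zero_of_mul h)).mono hHH').trans hab').trans
          ((hsupp _ _ (right_ne_zero_of_mul h)).mono hHH'))
      have h2 : R i b * R a j = 0 := by
        by_contra h
        exact hij ((((hsupp _ _ (left_ne_zero_of_mul h)).mono hHH').trans hab'.symm).trans
          ((hsupp _ _ (right_ne_zero_of_mul h)).mono hHH'))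
      rw [hform, h0, h1, h2]; simp
    · intro i j hij
      rw [hform, hsame i j (hij.mono le_sup_left), mul_zero, add_zero, hRb i j hij]
    · have hba_val : T a b / (S a a * S b b) * (S a a * S b b) = T a b :=
        div_mul_cancel₀ _ (mul_pos (hS a) (hS b)).ne'
      intro i j hij
      rw [hform]
      rcases Finset.mem_insert.mp hij with h | h
      · rcases Sym2.eq_iff.mp h with ⟨rfl, rfl⟩ | ⟨rfl, rfl⟩
        · rw [hRab, hRa, hRbb, zero_mul, zero_add, add_zero, hba_val]
        · rw [hRba, hRa, hRbb, zero_mul, zero_add, zero_add, mul_comm (S i i), hba_val,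
            hT.apply i j]
      · have hr : H.Reachable i j := by
          refine SimpleGraph.Adj.reachable (Or.inr ?_)
          rw [SimpleGraph.fromEdgeSet_adj]
          exact ⟨h, SimpleGraph.Adj.ne (hF _ hij).1⟩
        rw [hsame i j hr, mul_zero, add_zero, hRT i j h]

/-! ### Soft thresholding and the optimality of the decomposed matrix -/

lemma threshGL_isSymm {p : ℕ} {S Λ : Matrix (Fin p) (Fin p) ℝ} (hS : S.IsSymm)
    (hΛ : Λ.IsSymm) : (threshGL S Λ).IsSymm := by
  refine Matrix.IsSymm.ext fun i j => ?_
  simp only [threshGL, Matrix.of_apply, hS.apply i j, hΛ.apply i j, eq_comm (a := j) (b := i)]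

/-- Soft thresholding moves `S i j` towards `0` by at most `Λ i j`, and by exactly `Λ i j` when the
result is nonzero. -/
lemma threshGL_spec {p : ℕ} {S Λ : Matrix (Fin p) (Fin p) ℝ} (hΛ : ∀ i j, 0 ≤ Λ i j)
    {i j : Fin p} (hij : i ≠ j) :
    |S i j - threshGL S Λ i j| ≤ Λ i j ∧
      (threshGL S Λ i j - S i j) * threshGL S Λ i j = -(Λ i j * |threshGL S Λ i j|) ∧
      |threshGL S Λ i j| ≤ |S i j| := by
  have hL := hΛ i j
  simp only [threshGL, Matrix.of_apply, hij, false_or]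
  split_ifs with h
  · simp [h]
  · push Not at h
    rcases lt_trichotomy (S i j) 0 with hs | hs | hs
    · rw [abs_of_neg hs] at h
      have h1 : S i j - Λ i j * -1 < 0 := by linarith
      rw [Real.sign_of_neg hs, abs_of_neg h1, abs_of_neg hs]
      refine ⟨?_, by ring, by linarith⟩
      rw [abs_of_nonpos (by linarith)]; linarith
    · rw [hs, abs_zero] at h
      linarith
    · rw [abs_of_pos hs] at h
      have h1 : 0 < S i j - Λ i j * 1 := by linarith
      rw [Real.sign_of_pos hs, abs_of_pos h1, abs_of_pos hs]
      refine ⟨?_, by ring, by linarith⟩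
      rw [abs_of_nonneg (by linarith)]; linarith

/-- Mathlib's `IsBridge` also holds for non-adjacent vertices in different components; this is why
such pairs contribute nothing to `ζ` and `Θ`. -/
lemma eq_zero_of_notMem_edgeSet {p : ℕ} {T : Matrix (Fin p) (Fin p) ℝ} {i j : Fin p}
    (hij : i ≠ j) (h : s(i, j) ∉ (suppG T).edgeSet) : T i j = 0 := by
  by_contra h0
  exact h (by rw [SimpleGraph.mem_edgeSet, suppG, SimpleGraph.fromRel_adj]; exact ⟨hij, Or.inl h0⟩)

/-- Theorem 5: sufficient conditions for the bridge-block decomposed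
matrix to minimize the traditional graphical lasso. -/
theorem stmt_10 {p : ℕ} (hp : 1 ≤ p)
    (S Λ : Matrix (Fin p) (Fin p) ℝ)
    (hSsymm : S.IsSymm) (hΛsymm : Λ.IsSymm)
    (hSdiag : ∀ i, 0 < S i i) (hΛnn : ∀ i j, 0 ≤ Λ i j) (hΛdiag : ∀ i, Λ i i = 0)
    (hA1 : ∀ i j, i ≠ j → |S i j| < Real.sqrt (S i i * S j j))
    -- the family of block matrices `Θ̂_k`, minimizers of the glasso subproblems
    (Θhat : ∀ V : Finset (Fin p), Matrix ↥V ↥V ℝ)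
    (hΘhat : ∀ V, IsBlock (suppG (threshGL S Λ)) V → IsGLSubMinimizer S Λ V (Θhat V))
    -- the matrix `Θ` defined by the bridge-block decomposed form
    (Θ : Matrix (Fin p) (Fin p) ℝ) (hΘsymm : Θ.IsSymm)
    (hΘblock : ∀ V, IsBlock (suppG (threshGL S Λ)) V → ∀ i, ∀ hi : i ∈ V, ∀ j, ∀ hj : j ∈ V,
      Θ i j = if i = j then Θhat V ⟨i, hi⟩ ⟨j, hj⟩ + zetaT S (threshGL S Λ) i
        else Θhat V ⟨i, hi⟩ ⟨j, hj⟩)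
    (hΘbridge : ∀ i j, (suppG (threshGL S Λ)).IsBridge s(i, j) →
      Θ i j = -(threshGL S Λ i j) / (S i i * S j j - threshGL S Λ i j ^ 2))
    (hΘzero : ∀ i j, i ≠ j → ¬(bridgeDeleted (suppG (threshGL S Λ))).Reachable i j →
      ¬(suppG (threshGL S Λ)).IsBridge s(i, j) → Θ i j = 0)
    -- the sufficient conditions
    (hPD : Θ.PosDef)
    (hKKT : ∀ i j, i ≠ j → ¬(bridgeDeleted (suppG (threshGL S Λ))).Reachable i j →
      |S i j - Θ⁻¹ i j| ≤ Λ i j) :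
    ∀ Θ' : Matrix (Fin p) (Fin p) ℝ, Θ'.IsSymm → Θ'.PosDef →
      objf S Λ Θ ≤ objf S Λ Θ' := by
  set T := threshGL S Λ with hTdef
  set G := suppG T with hG
  have hTs : T.IsSymm := threshGL_isSymm hSsymm hΛsymm
  have hTS : ∀ i j, i ≠ j → T i j ^ 2 < S i i * S j j := by
    intro i j hij
    have h1 := ((threshGL_spec (S := S) hΛnn hij).2.2).trans_lt (hA1 i j hij)
    rw [Real.lt_sqrt (abs_nonneg _), sq_abs] at h1
    exact h1
  -- the block containing `i`
  let blk : Fin p → Finset (Fin p) := fun i =>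
    Finset.univ.filter fun j => (bridgeDeleted G).Reachable i j
  have hmem : ∀ i j, j ∈ blk i ↔ (bridgeDeleted G).Reachable i j := fun i j => by simp [blk]
  have hblk : ∀ i, IsBlock G (blk i) := fun i => ⟨i, hmem i⟩
  have hself : ∀ i, i ∈ blk i := fun i => (hmem i i).mpr (SimpleGraph.Reachable.refl _)
  have hblk_eq : ∀ i j, (bridgeDeleted G).Reachable i j → blk i = blk j := by
    intro i j h
    ext k
    rw [hmem, hmem]
    exact ⟨fun h' => h.symm.trans h', fun h' => h.trans h'⟩
  have hsubS : ∀ V : Finset (Fin p), (subMat S V).IsSymm := fun V => hSsymm.submatrix _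
  have hsubΛ : ∀ V : Finset (Fin p), (subMat Λ V).IsSymm := fun V => hΛsymm.submatrix _
  have hsub : ∀ i, GLKKT (subMat S (blk i)) (subMat Λ (blk i)) (Θhat (blk i)) (Θhat (blk i))⁻¹ :=
    fun i => GLKKT.of_isMin (hsubS _) (hsubΛ _) (fun _ _ => hΛnn _ _) (hΘhat _ (hblk i)).1
      (hΘhat _ (hblk i)).2.1 (hΘhat _ (hblk i)).2.2
  -- `R₀` is the block diagonal matrix of the inverses of the block minimizers
  let R₀ : Matrix (Fin p) (Fin p) ℝ := Matrix.of fun i j =>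
    if h : (bridgeDeleted G).Reachable i j then
      (Θhat (blk i))⁻¹ ⟨i, hself i⟩ ⟨j, (hmem i j).mpr h⟩ else 0
  let M : Matrix (Fin p) (Fin p) ℝ := Matrix.of fun i j =>
    if (bridgeDeleted G).Reachable i j then Θ i j - (if i = j then zetaT S T i else 0) else 0
  have hR₀z : ∀ i j, ¬ (bridgeDeleted G).Reachable i j → R₀ i j = 0 := fun i j h => by
    simp only [R₀, Matrix.of_apply, dif_neg h]
  have hR₀V : ∀ V i j (hi : i ∈ V) (hj : j ∈ V), V = blk i →
      R₀ i j = (Θhat V)⁻¹ ⟨i, hi⟩ ⟨j, hj⟩ := by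
    rintro V i j hi hj rfl
    simp only [R₀, Matrix.of_apply, dif_pos ((hmem i j).mp hj)]
  have hMV : ∀ i j k (hj : j ∈ blk i) (hk : k ∈ blk i),
      M j k = Θhat (blk i) ⟨j, hj⟩ ⟨k, hk⟩ := by
    intro i j k hj hk
    have hr : (bridgeDeleted G).Reachable j k :=
      ((hmem i j).mp hj).symm.trans ((hmem i k).mp hk)
    simp only [M, Matrix.of_apply, if_pos hr]
    rw [hΘblock _ (hblk i) j hj k hk]
    by_cases hjk : j = k <;> simp [hjk]
  have hR₀d : ∀ i, R₀ i i = S i i := by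
    intro i
    rw [hR₀V _ i i (hself i) (hself i) rfl, (hsub i).1]
    rfl
  have hR₀s : R₀.IsSymm := by
    refine Matrix.IsSymm.ext fun i j => ?_
    by_cases h : (bridgeDeleted G).Reachable i j
    · have hj := (hmem i j).mpr h
      rw [hR₀V _ i j (hself i) hj rfl, hR₀V _ j i hj (hself i) (hblk_eq i j h)]
      exact (isSymm_inv (hΘhat _ (hblk i)).1).apply _ _
    · rw [hR₀z i j h, hR₀z j i fun h' => h h'.symm]
  have hMR : M * R₀ = 1 := by
    ext i j
    rw [Matrix.mul_apply]
    by_cases h : (bridgeDeleted G).Reachable i j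
    · have hj := (hmem i j).mpr h
      have h1 : ∑ k, M i k * R₀ k j = ∑ k ∈ blk i, M i k * R₀ k j := by
        refine (Finset.sum_subset (Finset.subset_univ _) fun k _ hk => ?_).symm
        rw [hmem] at hk
        simp only [M, Matrix.of_apply, if_neg hk, zero_mul]
      rw [h1, ← Finset.sum_coe_sort]
      have h2 : ∀ k : ↥(blk i), M i k * R₀ k j =
          Θhat (blk i) ⟨i, hself i⟩ k * (Θhat (blk i))⁻¹ k ⟨j, hj⟩ := by
        intro k
        rw [hMV i i k (hself i) k.2, hR₀V (blk i) k j k.2 hj (hblk_eq _ _ ((hmem i k).mp k.2))]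
      rw [Finset.sum_congr rfl fun k _ => h2 k, ← Matrix.mul_apply,
        Matrix.mul_nonsing_inv _ (isUnit_iff_ne_zero.mpr (hΘhat _ (hblk i)).2.1.det_pos.ne')]
      simp [Matrix.one_apply]
    · have hne : i ≠ j := by
        rintro rfl
        exact h (SimpleGraph.Reachable.refl _)
      rw [Matrix.one_apply_ne hne]
      refine Finset.sum_eq_zero fun k _ => ?_
      by_cases hk : (bridgeDeleted G).Reachable i k
      · rw [hR₀z k j fun h' => h (hk.trans h'), mul_zero]
      · simp only [M, Matrix.of_apply, if_neg hk, zero_mul]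
  let F : Finset (Sym2 (Fin p)) := Finset.univ.filter fun e => e ∈ G.edgeSet ∧ G.IsBridge e
  have hF : ∀ e, e ∈ F ↔ e ∈ G.edgeSet ∧ G.IsBridge e := fun e => by simp [F]
  obtain ⟨R, hR, -, -, hRb, hRT⟩ := exists_inverse hTs hSdiag hTS G hMR hR₀s hR₀z hR₀d F
    fun e he => (hF e).mp he
  have hΘeq : M + ∑ e ∈ F, bridgeTerm S T e = Θ := by
    ext i j
    rw [Matrix.add_apply, Matrix.sum_apply]
    by_cases hij : i = j
    · subst hij
      have hz : ∑ e ∈ F, bridgeTerm S T e i i = zetaT S T i := by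
        simp only [bridgeTerm, Matrix.of_apply, if_true, zetaT]
        rw [← Finset.mul_sum, Finset.sum_comm]
        congr 1
        refine Finset.sum_congr rfl fun m _ => ?_
        rw [Finset.sum_ite_eq]
        by_cases hb : G.IsBridge s(i, m)
        · rw [if_pos hb]
          split_ifs with hm
          · rfl
          -- a separated non-adjacent pair counts as a bridge, but carries `T i m = 0`
          · have hne : i ≠ m := by
              rintro rfl
              exact not_bridge_of_reachable (SimpleGraph.Reachable.refl _) hb
            rw [eq_zero_of_notMem_edgeSet hne fun h => hm ((hF _).mpr ⟨h, hb⟩)]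
            simp
        · rw [if_neg hb, if_neg fun h => hb ((hF _).mp h).2]
      rw [hz]
      simp [M]
    · simp only [bridgeTerm, Matrix.of_apply, if_neg hij]
      rw [Finset.sum_ite_eq]
      by_cases hb : G.IsBridge s(i, j)
      · have hr : ¬ (bridgeDeleted G).Reachable i j := fun h => not_bridge_of_reachable h hb
        simp only [M, Matrix.of_apply, if_neg hr, zero_add]
        rw [hΘbridge i j hb]
        split_ifs with hm
        · rfl
        · rw [eq_zero_of_notMem_edgeSet hij fun h => hm ((hF _).mpr ⟨h, hb⟩)]
          simp
      · rw [if_neg fun h => hb ((hF _).mp h).2, add_zero]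
        by_cases hr : (bridgeDeleted G).Reachable i j
        · simp [M, hr, hij]
        · simp [M, hr, hΘzero i j hij hr hb]
  rw [hΘeq] at hR
  have hinv : Θ⁻¹ = R := Matrix.inv_eq_right_inv hR
  intro Θ' _ hΘ'
  refine GLKKT.isMin hSsymm hΘsymm hPD ⟨fun i => ?_, fun i j hij => ?_⟩ Θ' hΘ'
  · rw [hinv, hRb i i (SimpleGraph.Reachable.refl _), hR₀d]
  · by_cases hr : (bridgeDeleted G).Reachable i j
    · have hj := (hmem i j).mpr hr
      have hk := (hsub i).2 ⟨i, hself i⟩ ⟨j, hj⟩ fun h => hij (congrArg Subtype.val h)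
      rw [hinv, hRb i j hr, hR₀V _ i j (hself i) hj rfl, hΘblock _ (hblk i) i (hself i) j hj,
        if_neg hij]
      exact hk
    · refine ⟨hKKT i j hij hr, ?_⟩
      by_cases hb : s(i, j) ∈ F
      · obtain ⟨-, h2, -⟩ := threshGL_spec (S := S) hΛnn hij
        rw [← hTdef] at h2
        have hδ : 0 < S i i * S j j - T i j ^ 2 := sub_pos.mpr (hTS i j hij)
        rw [hinv, hRT i j hb, hΘbridge i j ((hF _).mp hb).2, abs_div, abs_neg, abs_of_pos hδ,
          ← mul_div_assoc, ← mul_div_assoc, mul_neg, h2, neg_neg]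
      · have h0 : Θ i j = 0 := by
          by_cases hb' : G.IsBridge s(i, j)
          · rw [hΘbridge i j hb',
              eq_zero_of_notMem_edgeSet hij fun h => hb ((hF _).mpr ⟨h, hb'⟩)]
            simp
          · exact hΘzero i j hij hr hb'
        simp [h0]
end
end
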